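/- arXiv:1204.2932 — 3 statements merged into one kernel-verified Lean document; each statement's English description precedes it below -/
import Mathlib

section
/- Let Q be a finite type with |Q| = n ≥ 1, let δ : Q → Bool → Q be a transition function, and let t ∈ Q be a sink (δ t b = t for both b ∈ Bool). Suppose that for every state q ∈ Q there exists a word w_q ∈ List Bool with |w_q| ≤ n − 1 and δ*(q, w_q) = t. Then there exists a single word w ∈ List Bool with |w| ≤ (n − 1)² such that δ*(q, w) = t for every q ∈ Q. -/
/-- The state reached from `q` by reading the word `w` letter by letter. -/
def runDFA {Q : Type*} (δ : Q → Bool → Q) (q : Q) (w : List Bool) : Q :=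
  w.foldl δ q

theorem runDFA_append {Q : Type*} (δ : Q → Bool → Q) (q : Q) (u v : List Bool) :
    runDFA δ q (u ++ v) = runDFA δ (runDFA δ q u) v :=
  List.foldl_append

theorem runDFA_sink {Q : Type*} {δ : Q → Bool → Q} {t : Q} (hsink : ∀ b : Bool, δ t b = t)
    (w : List Bool) : runDFA δ t w = t :=
  List.foldl_fixed' hsink w

/-- If every state reaches the sink `t` by a word of length at most `k`, then the states of a
finite set `S` are simultaneously led to `t` by a word of length at most `S.card * k`. -/
theorem exists_word_finset_to_sink {Q : Type*} {δ : Q → Bool → Q} {t : Q} {k : ℕ}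
    (hsink : ∀ b : Bool, δ t b = t)
    (hreach : ∀ q : Q, ∃ w : List Bool, w.length ≤ k ∧ runDFA δ q w = t) (S : Finset Q) :
    ∃ w : List Bool, w.length ≤ S.card * k ∧ ∀ q ∈ S, runDFA δ q w = t := by
  classical
  induction S using Finset.induction_on with
  | empty => exact ⟨[], by simp⟩
  | insert a S ha ih =>
    obtain ⟨u, hu, hS⟩ := ih
    obtain ⟨v, hv, ht⟩ := hreach (runDFA δ a u)
    refine ⟨u ++ v, ?_, fun q hq => ?_⟩
    · rw [List.length_append, Finset.card_insert_of_notMem ha, Nat.succ_mul]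
      exact Nat.add_le_add hu hv
    · rw [runDFA_append]
      rcases Finset.mem_insert.mp hq with rfl | hq
      · exact ht
      · rw [hS q hq, runDFA_sink hsink]

/-- If every state of an `n`-state automaton can reach the sink `t` by some word of
length at most `n - 1`, then there is a single word of length at most `(n-1)²` that
leads every state to `t`. -/
theorem synchronizing_word_to_sink {Q : Type*} [Fintype Q]
    (δ : Q → Bool → Q) (t : Q) (n : ℕ) (hn : Fintype.card Q = n) (hn1 : 1 ≤ n)
    (hsink : ∀ b : Bool, δ t b = t)
    (hreach : ∀ q : Q, ∃ w : List Bool, w.length ≤ n - 1 ∧ runDFA δ q w = t) :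
    ∃ w : List Bool, w.length ≤ (n - 1) ^ 2 ∧ ∀ q : Q, runDFA δ q w = t := by
  classical
  obtain ⟨w, hw, h⟩ := exists_word_finset_to_sink hsink hreach (Finset.univ.erase t)
  refine ⟨w, ?_, fun q => ?_⟩
  · rwa [Finset.card_erase_of_mem (Finset.mem_univ t), Finset.card_univ, hn, ← sq] at hw
  · by_cases hq : q = t
    · rw [hq, runDFA_sink hsink]
    · exact h q (Finset.mem_erase.mpr ⟨hq, Finset.mem_univ q⟩)
end

section
/- Let s₀ be a finite binary word and let u₁, …, u_j (j ≥ 1) be nonempty finite binary words, and set K = |u₁| + ⋯ + |u_j|. Then there exists a finite binary word s having s₀ as a prefix such that |s| ≤ |s₀| + 1 + log₂ K (logarithm base 2, real-valued) and s is not an infix of u_i^ω for any 1 ≤ i ≤ j. -/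
/-- The finite binary word `w` occurs in the infinite binary sequence `x` at position `i`. -/
def occursAt (w : List Bool) (x : ℕ → Bool) (i : ℕ) : Prop :=
  ∀ k : Fin w.length, x (i + k.val) = w.get k

/-- The periodic infinite binary sequence `u^ω` determined by a finite binary word `u`:
`u^ω(i) = u(i mod |u|)`. -/
def periodicSeq (u : List Bool) : ℕ → Bool :=
  fun i => u.getD (i % u.length) false

/-- `u^ω` is invariant under reducing the starting position modulo `|u|`. -/
theorem periodicSeq_mod_add (u : List Bool) (p m : ℕ) :
    periodicSeq u (p % u.length + m) = periodicSeq u (p + m) := by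
  simp [periodicSeq]

/-- If `s₀ ++ t` occurs in `x` at position `i`, then `t` can be read off `x` from `i + |s₀|`. -/
theorem occursAt.getElem_append_right {s₀ t : List Bool} {x : ℕ → Bool} {i : ℕ}
    (h : occursAt (s₀ ++ t) x i) (k : ℕ) (hk : k < t.length) :
    x (i + (s₀.length + k)) = t[k] := by
  simpa using h ⟨s₀.length + k, by simpa using hk⟩

/-- Given a word `s₀` and nonempty words `u₁, …, u_j` of total length `K`, there is an
extension `s` of `s₀` of length at most `|s₀| + 1 + log₂ K` that is an infix of no
periodic sequence `u_i^ω`. -/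
theorem exists_spoiler_extension (s₀ : List Bool) (j : ℕ) (hj : 1 ≤ j)
    (u : Fin j → List Bool) (hu : ∀ i, u i ≠ []) (K : ℕ)
    (hK : K = ∑ i, (u i).length) :
    ∃ s : List Bool, s₀ <+: s ∧
      (s.length : ℝ) ≤ s₀.length + 1 + Real.logb 2 K ∧
      ∀ i : Fin j, ¬ ∃ pos : ℕ, occursAt s (periodicSeq (u i)) pos := by
  let n := Nat.log 2 K + 1
  let window : (Σ i, Fin (u i).length) → Fin n → Bool :=
    fun q k => periodicSeq (u q.1) (q.2 + (s₀.length + k))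
  have hcard : Fintype.card (Σ i, Fin (u i).length) < Fintype.card (Fin n → Bool) := by
    simpa [← hK] using Nat.lt_pow_succ_log_self one_lt_two K
  obtain ⟨f, hf⟩ : ∃ f, ∀ q, window q ≠ f := by
    by_contra! hsurj
    exact absurd (Fintype.card_le_of_surjective window hsurj) hcard.not_ge
  refine ⟨s₀ ++ List.ofFn f, List.prefix_append _ _, ?_, ?_⟩
  · have hlog := Real.natLog_le_logb K 2
    simp only [List.length_append, List.length_ofFn, n]
    push_cast at hlog ⊢
    linarith
  · rintro i ⟨pos, hpos⟩
    refine hf ⟨i, pos % (u i).length, Nat.mod_lt _ (List.length_pos_iff.mpr (hu i))⟩ ?_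
    funext k
    have hk := hpos.getElem_append_right k (by rw [List.length_ofFn]; exact k.isLt)
    rw [List.getElem_ofFn] at hk
    exact (periodicSeq_mod_add _ _ _).trans hk
end

section
/- Let Q be a finite type with |Q| = n ≥ 1, let δ : Q → (Bool × Bool) → Q be a transition function, and let t ∈ Q be absorbing (δ t x = t for all x). Suppose that for every state q ∈ Q and every adversary sequence s : Fin n → Bool there exists a coin sequence c : Fin n → Bool such that reading the word of pairs (s 0, c 0), (s 1, c 1), …, (s (n−1), c (n−1)) from q ends in t. Then there exist N ≤ n² and a function ρ : (Fin N → Bool) → (Fin N → Bool) such that for every q ∈ Q and every adversary sequence s : Fin N → Bool, reading the word of pairs (s 0, (ρ s) 0), …, (s (N−1), (ρ s) (N−1)) from q ends in t. -/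
/-- The state reached from `q` by reading a word over `Bool × Bool`
(adversary action, coin outcome) letter by letter. -/
def runMDP {Q : Type*} (δ : Q → (Bool × Bool) → Q) (q : Q) (w : List (Bool × Bool)) : Q :=
  w.foldl δ q

theorem runMDP_append {Q : Type*} (δ : Q → (Bool × Bool) → Q) (q : Q)
    (v w : List (Bool × Bool)) : runMDP δ q (v ++ w) = runMDP δ (runMDP δ q v) w :=
  List.foldl_append

theorem runMDP_of_absorbing {Q : Type*} {δ : Q → (Bool × Bool) → Q} {t : Q}
    (habs : ∀ x, δ t x = t) (w : List (Bool × Bool)) : runMDP δ t w = t :=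
  List.foldl_fixed' habs w

theorem map_finRange_pair_eq_zip {α β : Type*} {m : ℕ} (s : Fin m → α) (c : Fin m → β) :
    ((List.finRange m).map fun i => (s i, c i)) = (List.ofFn s).zip (List.ofFn c) := by
  rw [List.ofFn_eq_map, List.ofFn_eq_map, List.zip_map']

/-- If each single state can be led to the absorbing state `t` against every adversary word of
length `n`, then the states of a list `l` can be led to `t` simultaneously against every adversary
word of length `l.length * n`. -/
theorem exists_coins_of_list {Q : Type*} {δ : Q → (Bool × Bool) → Q} {t : Q} {n : ℕ}
    (habs : ∀ x, δ t x = t)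
    (hreach : ∀ (q : Q) (a : List Bool), a.length = n →
      ∃ c : List Bool, c.length = n ∧ runMDP δ q (a.zip c) = t)
    (l : List Q) (a : List Bool) (ha : a.length = l.length * n) :
    ∃ c : List Bool, c.length = a.length ∧ ∀ q ∈ l, runMDP δ q (a.zip c) = t := by
  induction l generalizing a with
  | nil => exact ⟨a, rfl, by simp⟩
  | cons p l ih =>
    rw [List.length_cons, Nat.add_mul, Nat.one_mul] at ha
    have htake : (a.take (l.length * n)).length = l.length * n := by
      rw [List.length_take]; omega
    have hdrop : (a.drop (l.length * n)).length = n := by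
      rw [List.length_drop]; omega
    obtain ⟨c₁, hc₁, h₁⟩ := ih _ htake
    obtain ⟨c₂, hc₂, h₂⟩ := hreach (runMDP δ p ((a.take (l.length * n)).zip c₁)) _ hdrop
    have hzip : a.zip (c₁ ++ c₂) =
        (a.take (l.length * n)).zip c₁ ++ (a.drop (l.length * n)).zip c₂ := by
      rw [← List.zip_append hc₁.symm, List.take_append_drop]
    refine ⟨c₁ ++ c₂, by rw [List.length_append]; omega, fun q hq => ?_⟩
    rw [hzip, runMDP_append]
    rcases List.mem_cons.mp hq with rfl | hq
    · exact h₂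
    · rw [h₁ q hq, runMDP_of_absorbing habs]

/-- If for every state `q` of an `n`-state system and every adversary sequence of
length `n` there is a coin sequence of length `n` leading `q` to the absorbing state `t`,
then there are `N ≤ n²` and a single response `ρ` of length `N` leading every state to `t`
against every adversary sequence of length `N`. -/
theorem exists_response_leading_to_top {Q : Type*} [Fintype Q]
    (δ : Q → (Bool × Bool) → Q) (t : Q) (n : ℕ) (hn : Fintype.card Q = n) (hn1 : 1 ≤ n)
    (habs : ∀ x : Bool × Bool, δ t x = t)
    (hreach : ∀ (q : Q) (s : Fin n → Bool), ∃ c : Fin n → Bool,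
      runMDP δ q ((List.finRange n).map fun i => (s i, c i)) = t) :
    ∃ N : ℕ, N ≤ n ^ 2 ∧ ∃ ρ : (Fin N → Bool) → (Fin N → Bool),
      ∀ (q : Q) (s : Fin N → Bool),
        runMDP δ q ((List.finRange N).map fun i => (s i, ρ s i)) = t := by
  have hreach_list : ∀ (q : Q) (a : List Bool), a.length = n →
      ∃ c : List Bool, c.length = n ∧ runMDP δ q (a.zip c) = t := by
    rintro q a rfl
    obtain ⟨c, hc⟩ := hreach q a.get
    rw [map_finRange_pair_eq_zip, List.ofFn_get] at hc
    exact ⟨List.ofFn c, List.length_ofFn, hc⟩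
  have hcoins : ∀ s : Fin (n ^ 2) → Bool, ∃ c : Fin (n ^ 2) → Bool, ∀ q : Q,
      runMDP δ q ((List.finRange (n ^ 2)).map fun i => (s i, c i)) = t := by
    intro s
    obtain ⟨c, hc, h⟩ := exists_coins_of_list habs hreach_list Finset.univ.toList (List.ofFn s)
      (by rw [List.length_ofFn, Finset.length_toList, Finset.card_univ, hn, sq])
    rw [List.length_ofFn] at hc
    refine ⟨fun i => c.get (i.cast hc.symm), fun q => ?_⟩
    have hofFn : List.ofFn (fun i : Fin (n ^ 2) => c.get (i.cast hc.symm)) = c := by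
      rw [← List.ofFn_congr hc, List.ofFn_get]
    rw [map_finRange_pair_eq_zip, hofFn]
    exact h q (Finset.mem_toList.mpr (Finset.mem_univ q))
  choose ρ hρ using hcoins
  exact ⟨n ^ 2, le_rfl, ρ, fun q s => hρ s q⟩
end
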